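/- Let Ω_h be a finite grid set with boundary ∂Ω_h as above, and let 𝒟, 𝒟· be the forward-gradient and backward-divergence operators with zero extension. For every function u : Ω_h → ℝ³ there exist unique functions w : Ω_h → ℝ³ and φ : Ω_h → ℝ such that 𝒟·w = 0 and w + 𝒟φ = u on Ω_h ∖ ∂Ω_h, while w = 0 and φ = 0 on ∂Ω_h (u need not vanish on ∂Ω_h). (Discrete Helmholtz–Hodge decomposition.) -/

import Mathlib

open Finset MeasureTheory Set Filter

/-- Standard basis vector `e^i` of the integer grid `ℤ³` (grid points `x` represent `h•x ∈ hℤ³`). -/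
def gE (i : Fin 3) : Fin 3 → ℤ := fun j => if j = i then 1 else 0

/-- Forward difference quotient `D_i⁺φ(x) = (φ(x+he^i) − φ(x))/h`. -/
noncomputable def Dp (h : ℝ) (i : Fin 3) (φ : (Fin 3 → ℤ) → ℝ) (x : Fin 3 → ℤ) : ℝ :=
  (φ (x + gE i) - φ x) / h

/-- Centered second difference `D_i²φ(x) = (φ(x+he^i)+φ(x−he^i)−2φ(x))/h²`. -/
noncomputable def Dtwo (h : ℝ) (i : Fin 3) (φ : (Fin 3 → ℤ) → ℝ) (x : Fin 3 → ℤ) : ℝ :=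
  (φ (x + gE i) + φ (x - gE i) - 2 * φ x) / h ^ 2

/-- Discrete (forward) gradient `𝒟φ`. -/
noncomputable def dgrad (h : ℝ) (φ : (Fin 3 → ℤ) → ℝ) (x : Fin 3 → ℤ) : Fin 3 → ℝ :=
  fun i => Dp h i φ x

/-- Discrete (backward) divergence `𝒟·w`. -/
noncomputable def ddiv (h : ℝ) (w : (Fin 3 → ℤ) → Fin 3 → ℝ) (x : Fin 3 → ℤ) : ℝ :=
  ∑ i, (w x i - w (x - gE i) i) / h

/-- Grid boundary `∂Ω_h = {x ∈ Ω_h | {x ± he^i} ⊄ Ω_h}`. -/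
def gBdry (Ω : Finset (Fin 3 → ℤ)) : Finset (Fin 3 → ℤ) :=
  Ω.filter fun x => ¬ (∀ i, (x + gE i) ∈ Ω ∧ (x - gE i) ∈ Ω)

/-! With `I` the interior, `w = 0` off `I` and `w + 𝒟φ = u` on `I` mean `w = 1_I (u - 𝒟φ)`, so the
decomposition is equivalent to the discrete Poisson problem `𝒟·(1_I 𝒟φ) = 𝒟·(1_I u)` on `I`, `φ = 0`
off `I`. This is a square linear system, so it suffices to show that its kernel is trivial.
Summation by parts gives `∑_I φ 𝒟·(1_I 𝒟φ) = -∑_I |𝒟φ|²`, hence a solution of the homogeneous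
problem has `𝒟φ = 0` on `I`. It is then constant along the ray `x, x + e, x + 2e, …` through any
point of its support, and such a ray leaves the finite set `I`. -/

section FiniteSupport

variable {G M : Type*} [AddGroup G]

lemma eq_zero_of_forall_mem_add_right_eq [Zero M] {I : Finset G} {φ : G → M} {v : G}
    (hv : ¬IsOfFinAddOrder v) (hφ : ∀ x ∉ I, φ x = 0) (hstep : ∀ x ∈ I, φ (x + v) = φ x) :
    φ = 0 := by
  by_contra hne
  obtain ⟨x, hx⟩ := Function.ne_iff.1 hne
  have ray_const (n : ℕ) : φ (x + n • v) = φ x := by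
    induction n with
    | zero => simp
    | succ n ih =>
      have ray_mem : x + n • v ∈ I := not_imp_comm.1 (hφ _) (ih ▸ hx)
      rw [succ_nsmul, ← add_assoc, hstep _ ray_mem, ih]
  have ray_injective : Function.Injective fun n : ℕ ↦ x + n • v :=
    (add_right_injective x).comp (injective_nsmul_iff_not_isOfFinAddOrder.2 hv)
  exact Set.infinite_range_of_injective ray_injective <| I.finite_toSet.subset <|
    Set.range_subset_iff.2 fun n ↦ not_imp_comm.1 (hφ _) (ray_const n ▸ hx)

lemma sum_mul_comp_sub_right [NonUnitalNonAssocSemiring M] {I : Finset G}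
    {φ f : G → M} (hφ : ∀ x ∉ I, φ x = 0) (hf : ∀ x ∉ I, f x = 0) (v : G) :
    ∑ x ∈ I, φ x * f (x - v) = ∑ x ∈ I, φ (x + v) * f x := by
  have hleft : (fun x ↦ φ x * f (x - v)).support ⊆ I := fun x hx ↦
    not_imp_comm.1 (hφ x) (left_ne_zero_of_mul hx)
  have hright : (fun x ↦ φ (x + v) * f x).support ⊆ I := fun x hx ↦
    not_imp_comm.1 (hf x) (right_ne_zero_of_mul hx)
  rw [← finsum_eq_sum_of_support_subset _ hleft, ← finsum_eq_sum_of_support_subset _ hright,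
    ← finsum_comp_equiv (Equiv.addRight v)]
  simp

end FiniteSupport

lemma existsUnique_supported_of_ker_eq_zero {α K : Type*} [DivisionRing K] {I : Finset α}
    (L : (α → K) →ₗ[K] α → K)
    (hL : ∀ φ : α → K, (∀ x ∉ I, φ x = 0) → (∀ x ∈ I, L φ x = 0) → φ = 0) (f : α → K) :
    ∃! φ : α → K, (∀ x ∉ I, φ x = 0) ∧ ∀ x ∈ I, L φ x = f x := by
  let extend : (I → K) →ₗ[K] α → K := Function.ExtendByZero.linearMap K Subtype.val
  let restrict : (α → K) →ₗ[K] I → K := LinearMap.funLeft K K Subtype.val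
  have extend_off (φ : I → K) (x : α) (hx : x ∉ I) : extend φ x = 0 :=
    Function.extend_apply' _ _ _ fun ⟨y, hy⟩ ↦ hx (hy ▸ y.2)
  have extend_on (φ : I → K) (x : I) : extend φ x = φ x :=
    Subtype.val_injective.extend_apply _ _ x
  have injective : Function.Injective (restrict ∘ₗ L ∘ₗ extend) := by
    refine (injective_iff_map_eq_zero _).2 fun φ hLφ ↦ funext fun x ↦ ?_
    have extend_eq_zero : extend φ = 0 :=
      hL _ (extend_off φ) fun x hx ↦ congrFun hLφ ⟨x, hx⟩
    rw [← extend_on φ x, extend_eq_zero, Pi.zero_apply, Pi.zero_apply]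
  obtain ⟨φ, hφ⟩ := LinearMap.injective_iff_surjective.1 injective (restrict f)
  have solves (x : α) (hx : x ∈ I) : L (extend φ) x = f x := congrFun hφ ⟨x, hx⟩
  refine ⟨extend φ, ⟨extend_off φ, solves⟩, fun ψ ⟨hψ, hLψ⟩ ↦ sub_eq_zero.1 <| hL _ ?_ ?_⟩
  · intro x hx
    rw [Pi.sub_apply, hψ x hx, extend_off φ x hx, sub_zero]
  · intro x hx
    rw [map_sub, Pi.sub_apply, hLψ x hx, solves x hx, sub_self]

lemma eq_indicator_iff {α M : Type*} [Zero M] {s : Set α} {f g : α → M} :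
    f = s.indicator g ↔ (∀ x ∉ s, f x = 0) ∧ ∀ x ∈ s, f x = g x := by
  constructor
  · rintro rfl
    exact ⟨fun x hx ↦ Set.indicator_of_notMem hx g, fun x hx ↦ Set.indicator_of_mem hx g⟩
  · rintro ⟨hoff, hon⟩
    funext x
    by_cases hx : x ∈ s
    · rw [hon x hx, Set.indicator_of_mem hx]
    · rw [hoff x hx, Set.indicator_of_notMem hx]

section DifferenceOperators

variable {K G ι : Type*} [Field K] [AddGroup G] [Fintype ι]

/-- The forward-difference gradient with mesh size `h` along a family of steps `e : ι → G` in an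
arbitrary group. The operator `dgrad h` is the case `e = gE`. -/
def fwdGrad (h : K) (e : ι → G) : (G → K) →ₗ[K] G → ι → K where
  toFun φ x i := (φ (x + e i) - φ x) / h
  map_add' φ ψ := by
    ext x i
    simp only [Pi.add_apply]
    ring
  map_smul' c φ := by
    ext x i
    simp only [Pi.smul_apply, smul_eq_mul, RingHom.id_apply]
    ring

/-- The backward-difference divergence with mesh size `h` along a family of steps `e : ι → G`, the
negative adjoint of `fwdGrad h e`. The operator `ddiv h` is the case `e = gE`. -/
def bwdDiv (h : K) (e : ι → G) : (G → ι → K) →ₗ[K] G → K where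
  toFun w x := ∑ i, (w x i - w (x - e i) i) / h
  map_add' w v := by
    ext x
    simp only [Pi.add_apply, ← Finset.sum_add_distrib]
    exact Finset.sum_congr rfl fun i _ ↦ by ring
  map_smul' c w := by
    ext x
    simp only [Pi.smul_apply, smul_eq_mul, RingHom.id_apply, Finset.mul_sum]
    exact Finset.sum_congr rfl fun i _ ↦ by ring

/-- The Laplacian `𝒟·(1_I 𝒟φ)` of the Dirichlet problem on `I`. The gradient is cut off outside `I`
before the divergence is taken, so next to the complement of `I` this can differ from the sum of the
centered second differences of `φ`. -/
noncomputable def cutoffLaplacian (h : K) (e : ι → G) (I : Finset G) :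
    (G → K) →ₗ[K] G → K where
  toFun φ := bwdDiv h e ((I : Set G).indicator (fwdGrad h e φ))
  map_add' φ ψ := by rw [map_add, Set.indicator_add', map_add]
  map_smul' c φ := by
    rw [map_smul, RingHom.id_apply, ← map_smul (bwdDiv h e)]
    exact congrArg _ (Set.indicator_const_smul _ c _)

variable {h : K} {e : ι → G} {I : Finset G}

lemma sum_mul_bwdDiv {φ : G → K} {w : G → ι → K} (hφ : ∀ x ∉ I, φ x = 0)
    (hw : ∀ x ∉ I, w x = 0) :
    ∑ x ∈ I, φ x * bwdDiv h e w x = -∑ x ∈ I, fwdGrad h e φ x ⬝ᵥ w x := by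
  have shift (i : ι) : ∑ x ∈ I, φ x * w (x - e i) i = ∑ x ∈ I, φ (x + e i) * w x i :=
    sum_mul_comp_sub_right hφ (fun x hx ↦ congrFun (hw x hx) i) (e i)
  calc ∑ x ∈ I, φ x * bwdDiv h e w x
      = ∑ i, (∑ x ∈ I, φ x * w x i - ∑ x ∈ I, φ x * w (x - e i) i) / h := by
        simp only [bwdDiv, LinearMap.coe_mk, AddHom.coe_mk, Finset.mul_sum,
          ← Finset.sum_sub_distrib, Finset.sum_div, mul_div_assoc', mul_sub]
        exact Finset.sum_comm
    _ = ∑ i, ∑ x ∈ I, -((φ (x + e i) - φ x) / h * w x i) := by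
        simp only [shift, ← Finset.sum_sub_distrib, Finset.sum_div]
        exact Finset.sum_congr rfl fun i _ ↦ Finset.sum_congr rfl fun x _ ↦ by ring
    _ = -∑ x ∈ I, fwdGrad h e φ x ⬝ᵥ w x := by
        rw [Finset.sum_comm]
        simp only [Finset.sum_neg_distrib]
        rfl

lemma sum_mul_cutoffLaplacian {φ : G → K} (hφ : ∀ x ∉ I, φ x = 0) :
    ∑ x ∈ I, φ x * cutoffLaplacian h e I φ x =
      -∑ x ∈ I, fwdGrad h e φ x ⬝ᵥ fwdGrad h e φ x := by
  refine (sum_mul_bwdDiv hφ fun x hx ↦ Set.indicator_of_notMem hx _).trans ?_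
  exact congrArg Neg.neg <| Finset.sum_congr rfl fun x hx ↦ by
    rw [Set.indicator_of_mem (Finset.mem_coe.2 hx)]

lemma helmholtz_iff_poisson {u w : G → ι → K} {φ : G → K} :
    ((∀ x ∉ I, w x = 0 ∧ φ x = 0) ∧
        ∀ x ∈ I, bwdDiv h e w x = 0 ∧ w x + fwdGrad h e φ x = u x) ↔
      w = (I : Set G).indicator (u - fwdGrad h e φ) ∧ (∀ x ∉ I, φ x = 0) ∧
        ∀ x ∈ I, cutoffLaplacian h e I φ x = bwdDiv h e ((I : Set G).indicator u) x := by
  have w_eq_iff : w = (I : Set G).indicator (u - fwdGrad h e φ) ↔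
      (∀ x ∉ I, w x = 0) ∧ ∀ x ∈ I, w x + fwdGrad h e φ x = u x := by
    simp only [eq_indicator_iff, Finset.mem_coe, Pi.sub_apply, eq_sub_iff_add_eq]
  have poisson_iff (hw : w = (I : Set G).indicator (u - fwdGrad h e φ)) (x : G) :
      bwdDiv h e w x = 0 ↔
        cutoffLaplacian h e I φ x = bwdDiv h e ((I : Set G).indicator u) x := by
    rw [hw, Set.indicator_sub', map_sub, Pi.sub_apply, sub_eq_zero, eq_comm]
    rfl
  constructor
  · rintro ⟨hoff, hon⟩
    have hw := w_eq_iff.2 ⟨fun x hx ↦ (hoff x hx).1, fun x hx ↦ (hon x hx).2⟩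
    exact ⟨hw, fun x hx ↦ (hoff x hx).2, fun x hx ↦ (poisson_iff hw x).1 (hon x hx).1⟩
  · rintro ⟨hw, hφ, hpoisson⟩
    obtain ⟨hw_off, hw_on⟩ := w_eq_iff.1 hw
    exact ⟨fun x hx ↦ ⟨hw_off x hx, hφ x hx⟩,
      fun x hx ↦ ⟨(poisson_iff hw x).2 (hpoisson x hx), hw_on x hx⟩⟩

section Ordered

variable [LinearOrder K] [IsStrictOrderedRing K]

lemma fwdGrad_eq_zero_of_cutoffLaplacian_eq_zero {φ : G → K} (hφ : ∀ x ∉ I, φ x = 0)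
    (hΔ : ∀ x ∈ I, cutoffLaplacian h e I φ x = 0) : ∀ x ∈ I, fwdGrad h e φ x = 0 := by
  have energy : ∑ x ∈ I, fwdGrad h e φ x ⬝ᵥ fwdGrad h e φ x = 0 := by
    rw [← neg_eq_zero, ← sum_mul_cutoffLaplacian hφ]
    exact Finset.sum_eq_zero fun x hx ↦ by rw [hΔ x hx, mul_zero]
  have energy_density_nonneg (x : G) : 0 ≤ fwdGrad h e φ x ⬝ᵥ fwdGrad h e φ x :=
    Finset.sum_nonneg fun i _ ↦ mul_self_nonneg _
  intro x hx
  exact dotProduct_self_eq_zero.1 <|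
    (Finset.sum_eq_zero_iff_of_nonneg fun x _ ↦ energy_density_nonneg x).1 energy x hx

lemma existsUnique_poisson (hh : h ≠ 0) {i : ι} (hi : ¬IsOfFinAddOrder (e i)) (f : G → K) :
    ∃! φ : G → K, (∀ x ∉ I, φ x = 0) ∧ ∀ x ∈ I, cutoffLaplacian h e I φ x = f x := by
  refine existsUnique_supported_of_ker_eq_zero _ (fun φ hφ hΔ ↦ ?_) f
  refine eq_zero_of_forall_mem_add_right_eq hi hφ fun x hx ↦ ?_
  have hgrad : (φ (x + e i) - φ x) / h = 0 :=
    congrFun (fwdGrad_eq_zero_of_cutoffLaplacian_eq_zero hφ hΔ x hx) i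
  exact sub_eq_zero.1 ((div_eq_zero_iff.1 hgrad).resolve_right hh)

theorem discrete_helmholtz_hodge_general (hh : h ≠ 0) {i : ι} (hi : ¬IsOfFinAddOrder (e i))
    (I : Finset G) (u : G → ι → K) :
    ∃! p : (G → ι → K) × (G → K),
      (∀ x ∉ I, p.1 x = 0 ∧ p.2 x = 0) ∧
      ∀ x ∈ I, bwdDiv h e p.1 x = 0 ∧ p.1 x + fwdGrad h e p.2 x = u x := by
  obtain ⟨φ, hφ, φ_unique⟩ :=
    existsUnique_poisson (I := I) hh hi (bwdDiv h e ((I : Set G).indicator u))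
  simp only [helmholtz_iff_poisson]
  refine ⟨((I : Set G).indicator (u - fwdGrad h e φ), φ), ⟨rfl, hφ⟩, ?_⟩
  rintro ⟨w, ψ⟩ ⟨hw, hψ⟩
  obtain rfl : ψ = φ := φ_unique ψ hψ
  exact Prod.ext hw rfl

end Ordered

end DifferenceOperators

lemma forall_notMem_sdiff {α : Type*} [DecidableEq α] {s t : Finset α} {P : α → Prop} :
    (∀ x ∉ s \ t, P x) ↔ (∀ x ∉ s, P x) ∧ ∀ x ∈ t, P x := by
  simp only [Finset.mem_sdiff, not_and_or, not_not, or_imp, forall_and]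

lemma fwdGrad_gE (h : ℝ) (φ : (Fin 3 → ℤ) → ℝ) : fwdGrad h gE φ = dgrad h φ := rfl

lemma bwdDiv_gE (h : ℝ) (w : (Fin 3 → ℤ) → Fin 3 → ℝ) : bwdDiv h gE w = ddiv h w := rfl

lemma not_isOfFinAddOrder_gE (i : Fin 3) : ¬IsOfFinAddOrder (gE i) :=
  not_isOfFinAddOrder_of_isAddTorsionFree fun h ↦ by simpa [gE] using congrFun h i

/-- Theorem 2.2: discrete Helmholtz–Hodge decomposition,
existence and uniqueness. -/
theorem discrete_helmholtz_hodge
    (h : ℝ) (hh : 0 < h) (Ω : Finset (Fin 3 → ℤ))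
    (u : (Fin 3 → ℤ) → Fin 3 → ℝ) :
    ∃! p : ((Fin 3 → ℤ) → Fin 3 → ℝ) × ((Fin 3 → ℤ) → ℝ),
      (∀ x, x ∉ Ω → p.1 x = 0 ∧ p.2 x = 0) ∧
      (∀ x ∈ gBdry Ω, p.1 x = 0 ∧ p.2 x = 0) ∧
      (∀ x ∈ Ω \ gBdry Ω, ddiv h p.1 x = 0 ∧ p.1 x + dgrad h p.2 x = u x) := by
  simpa only [forall_notMem_sdiff, and_assoc, fwdGrad_gE, bwdDiv_gE] using
    discrete_helmholtz_hodge_general hh.ne' (not_isOfFinAddOrder_gE 0) (Ω \ gBdry Ω) u
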